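/- arXiv:quant-ph/0410080 — 2 statements merged into one kernel-verified Lean document; each statement's English description precedes it below -/
import Mathlib

section
/- (Algebraic identity underlying control without squeezing.) Let V be the 2×2 complex matrix [[0,0],[1,0]], set V_R := (V + V*)/2 and V_I := (V − V*)/(2i), let κ_f, κ_s ∈ ℝ with κ_f² + κ_s² = 1, and set V_f := κ_f·V, V_R^s := κ_s·V_R, V_I^s := κ_s·V_I. Then for every 2×2 complex matrix ρ: L_V(ρ) − L_{V_R^s}(ρ) + i·[V_R^s, {ρ, V_I^s}] = L_{V_f}(ρ) + L_{V_I^s}(ρ) + (i/2)·[V_I^s·V_R^s + V_R^s·V_I^s, ρ]. -/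
/-!
The dissipator is homogeneous of degree two under real scaling, so `κf ^ 2 + κs ^ 2 = 1` splits
`L_V` as `L_{κf V} + L_{κs V}` (`lind_real_smul`). What remains is an identity about
`κs V = A + iB` with `A = κs V_R` and `B = κs V_I` Hermitian, and it holds for any Hermitian pair
(`lind_add_I_smul`): the cross terms of `L_{A + iB}` are `i(BρA - AρB) - (i/2){[A, B], ρ}`, and
adding `i[A, {ρ, B}]` cancels the sandwiched terms and leaves `(i/2)[{A, B}, ρ]`.
The explicit entries of `V` play no role.
-/

open Matrix

/-- `V` is the lowering operator of the two-level atom. -/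
noncomputable def V : Matrix (Fin 2) (Fin 2) ℂ := !![0, 0; 1, 0]

/-- The Lindblad dissipator `L_W(ρ) = WρW* - (1/2){W*W, ρ}`. -/
noncomputable def lind (W ρ : Matrix (Fin 2) (Fin 2) ℂ) : Matrix (Fin 2) (Fin 2) ℂ :=
  W * ρ * Wᴴ - (1 / 2 : ℂ) • (Wᴴ * W * ρ + ρ * (Wᴴ * W))

/-- Real quadrature `V_R = (V + V*)/2`. -/
noncomputable def VR : Matrix (Fin 2) (Fin 2) ℂ := (1 / 2 : ℂ) • (V + Vᴴ)

/-- Imaginary quadrature `V_I = (V - V*)/(2i)`. -/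
noncomputable def VI : Matrix (Fin 2) (Fin 2) ℂ := (1 / (2 * Complex.I)) • (V - Vᴴ)

theorem lind_real_smul (c : ℝ) (W ρ : Matrix (Fin 2) (Fin 2) ℂ) :
    lind ((c : ℂ) • W) ρ = ((c : ℂ) ^ 2) • lind W ρ := by
  simp only [lind, conjTranspose_smul, Complex.star_def, Complex.conj_ofReal, smul_mul_assoc,
    mul_smul_comm]
  module

/-- The identity for an arbitrary operator `A + iB` in terms of its Hermitian quadratures. -/
theorem lind_add_I_smul {A B : Matrix (Fin 2) (Fin 2) ℂ} (hA : Aᴴ = A) (hB : Bᴴ = B)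
    (ρ : Matrix (Fin 2) (Fin 2) ℂ) :
    lind (A + Complex.I • B) ρ - lind A ρ +
        Complex.I • (A * (ρ * B + B * ρ) - (ρ * B + B * ρ) * A) =
      lind B ρ + (Complex.I / 2) • ((B * A + A * B) * ρ - ρ * (B * A + A * B)) := by
  simp only [lind, conjTranspose_add, conjTranspose_smul, hA, hB, Complex.star_def,
    Complex.conj_I, add_mul, mul_add, smul_mul_assoc, mul_smul_comm, mul_assoc, smul_add,
    smul_smul, neg_mul, mul_neg, Complex.I_mul_I, neg_neg, one_smul]
  module

theorem VR_conjTranspose : VRᴴ = VR := by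
  simp [VR, add_comm]

theorem VI_conjTranspose : VIᴴ = VI := by
  simp only [VI, conjTranspose_smul, conjTranspose_sub, conjTranspose_conjTranspose]
  have h : star (1 / (2 * Complex.I)) = -(1 / (2 * Complex.I)) := by simp
  rw [h]
  module

theorem VR_add_I_smul_VI : VR + Complex.I • VI = V := by
  have h : Complex.I * (1 / (2 * Complex.I)) = 1 / 2 := by
    field_simp [Complex.I_ne_zero]
  rw [VR, VI, smul_smul, h]
  module

/-- Algebraic identity underlying control without squeezing. -/
theorem control_without_squeezing_identity (κf κs : ℝ) (hκ : κf ^ 2 + κs ^ 2 = 1)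
    (ρ : Matrix (Fin 2) (Fin 2) ℂ) :
    lind V ρ - lind ((κs : ℂ) • VR) ρ +
        Complex.I •
          (((κs : ℂ) • VR) * (ρ * ((κs : ℂ) • VI) + ((κs : ℂ) • VI) * ρ) -
            (ρ * ((κs : ℂ) • VI) + ((κs : ℂ) • VI) * ρ) * ((κs : ℂ) • VR)) =
      lind ((κf : ℂ) • V) ρ + lind ((κs : ℂ) • VI) ρ +
        (Complex.I / 2) •
          ((((κs : ℂ) • VI) * ((κs : ℂ) • VR) + ((κs : ℂ) • VR) * ((κs : ℂ) • VI)) * ρ -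
            ρ * (((κs : ℂ) • VI) * ((κs : ℂ) • VR) + ((κs : ℂ) • VR) * ((κs : ℂ) • VI))) := by
  have hA : ((κs : ℂ) • VR)ᴴ = (κs : ℂ) • VR := by
    simp [conjTranspose_smul, VR_conjTranspose]
  have hB : ((κs : ℂ) • VI)ᴴ = (κs : ℂ) • VI := by
    simp [conjTranspose_smul, VI_conjTranspose]
  have hV : (κs : ℂ) • VR + Complex.I • (κs : ℂ) • VI = (κs : ℂ) • V := by
    rw [smul_comm, ← smul_add, VR_add_I_smul_VI]
  have key := lind_add_I_smul hA hB ρ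
  rw [hV] at key
  have hκ' : (κf : ℂ) ^ 2 + (κs : ℂ) ^ 2 = 1 := by exact_mod_cast hκ
  have split : lind V ρ = lind ((κf : ℂ) • V) ρ + lind ((κs : ℂ) • V) ρ := by
    rw [lind_real_smul, lind_real_smul, ← add_smul, hκ', one_smul]
  rw [split, add_sub_assoc, add_assoc, key, ← add_assoc]
end

section
/- (Existence condition for quasifree states.) Let n, a, b ∈ ℝ and c := a + ib. The following are equivalent: (i) the real 2×2 matrix Q_nc is positive semidefinite and for all vectors u, v ∈ ℝ² one has (uᵀ J₀ v)² ≤ (uᵀ Q_nc u)·(vᵀ Q_nc v); (ii) n ≥ 0 and n(n+1) ≥ |c|². -/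
/-!
Everything rests on `det Q = 4 (n (n + 1) - |c|²) + 1`, so that `|c|² ≤ n (n + 1)` means
`1 ≤ det Q`, and on the Lagrange-type identity
`(uᵀ Q u) (vᵀ Q v) = (uᵀ Q v)² + det Q * (uᵀ J₀ v)²`.
If `1 ≤ det Q`, the identity gives the inequality against the symplectic form. Conversely, at a
linearly independent `Q`-orthogonal pair the inequality reads `(uᵀ J₀ v)² ≤ det Q * (uᵀ J₀ v)²`, which
forces `1 ≤ det Q` since `uᵀ J₀ v ≠ 0`. The trace `2 (2 n + 1)` of `Q` settles the sign of `n`.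
-/

open Matrix

/-- The matrix kernel `J₀` of the symplectic form. -/
def J0 : Matrix (Fin 2) (Fin 2) ℝ := !![0, -1; 1, 0]

/-- The covariance matrix `Q_nc` of the squeezed quasifree state with mean photon number `n`
and squeezing parameter `c = a + ib`. -/
def Qnc (n a b : ℝ) : Matrix (Fin 2) (Fin 2) ℝ :=
  !![2 * n + 1 + 2 * a, 2 * b; 2 * b, 2 * n + 1 - 2 * a]

lemma dot_J0 (u v : Fin 2 → ℝ) : u ⬝ᵥ (J0 *ᵥ v) = u 1 * v 0 - u 0 * v 1 := by
  simp [J0, dotProduct, mulVec, Fin.sum_univ_two]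
  ring

lemma dot_Qnc (n a b : ℝ) (u v : Fin 2 → ℝ) :
    u ⬝ᵥ (Qnc n a b *ᵥ v) = (2 * n + 1 + 2 * a) * (u 0 * v 0) +
      2 * b * (u 0 * v 1 + u 1 * v 0) + (2 * n + 1 - 2 * a) * (u 1 * v 1) := by
  simp [Qnc, dotProduct, mulVec, Fin.sum_univ_two]
  ring

lemma Qnc_lagrange (n a b : ℝ) (u v : Fin 2 → ℝ) :
    (u ⬝ᵥ (Qnc n a b *ᵥ u)) * (v ⬝ᵥ (Qnc n a b *ᵥ v)) =
      (u ⬝ᵥ (Qnc n a b *ᵥ v)) ^ 2 +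
        (4 * (n * (n + 1) - (a ^ 2 + b ^ 2)) + 1) * (u ⬝ᵥ (J0 *ᵥ v)) ^ 2 := by
  simp only [dot_Qnc, dot_J0]
  ring

/-- Existence condition for quasifree states: positivity of the covariance against the
symplectic form is equivalent to `n ≥ 0` and `n(n+1) ≥ |c|²`. -/
theorem quasifree_existence_condition (n a b : ℝ) :
    ((Qnc n a b).PosSemidef ∧
        ∀ u v : Fin 2 → ℝ,
          (u ⬝ᵥ (J0 *ᵥ v)) ^ 2 ≤ (u ⬝ᵥ (Qnc n a b *ᵥ u)) * (v ⬝ᵥ (Qnc n a b *ᵥ v))) ↔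
      (0 ≤ n ∧ Complex.normSq ((a : ℂ) + (b : ℂ) * Complex.I) ≤ n * (n + 1)) := by
  have hc : Complex.normSq ((a : ℂ) + (b : ℂ) * Complex.I) = a ^ 2 + b ^ 2 :=
    Complex.normSq_add_mul_I a b
  rw [hc]
  constructor
  · rintro ⟨hpos, h⟩
    have hp : 0 ≤ 2 * n + 1 + 2 * a := by simpa [Qnc] using hpos.diag_nonneg (i := 0)
    have hr : 0 ≤ 2 * n + 1 - 2 * a := by simpa [Qnc] using hpos.diag_nonneg (i := 1)
    -- The standard basis shows that the diagonal entries of `Q` do not vanish.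
    have h1 := h ![1, 0] ![0, 1]
    simp only [dot_Qnc, dot_J0, cons_val_zero, cons_val_one] at h1
    have hp' : 0 < 2 * n + 1 + 2 * a := by
      refine lt_of_le_of_ne hp fun h0 => ?_
      rw [← h0] at h1
      norm_num at h1
    -- The second vector is `Q`-orthogonal to the first one.
    have h2 := h ![1, 0] ![-(2 * b), 2 * n + 1 + 2 * a]
    rw [Qnc_lagrange] at h2
    simp only [dot_Qnc, dot_J0, cons_val_zero, cons_val_one] at h2
    have hdet : a ^ 2 + b ^ 2 ≤ n * (n + 1) := by
      have hsq : 0 < (2 * n + 1 + 2 * a) ^ 2 := by positivity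
      by_contra! hlt
      nlinarith [mul_pos hsq (sub_pos.mpr hlt)]
    exact ⟨by nlinarith [sq_nonneg a, sq_nonneg b], hdet⟩
  · rintro ⟨hn, hdet⟩
    have key : ∀ u v : Fin 2 → ℝ, (u ⬝ᵥ (J0 *ᵥ v)) ^ 2 ≤
        (u ⬝ᵥ (Qnc n a b *ᵥ u)) * (v ⬝ᵥ (Qnc n a b *ᵥ v)) := by
      intro u v
      rw [Qnc_lagrange]
      nlinarith [sq_nonneg (u ⬝ᵥ (Qnc n a b *ᵥ v)),
        mul_nonneg (sub_nonneg.mpr hdet) (sq_nonneg (u ⬝ᵥ (J0 *ᵥ v)))]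
    refine ⟨PosSemidef.of_dotProduct_mulVec_nonneg ?_ fun x => ?_, key⟩
    · ext i j
      fin_cases i <;> fin_cases j <;> simp [Qnc]
    · -- For `x = (s, t)` and `y = J₀ x = (-t, s)` the values of the form at `x` and `y` have
      -- nonnegative product and their sum is `tr Q * |x|²`, so neither can be negative.
      rw [star_trivial]
      have hk := key x ![-x 1, x 0]
      have hsum : x ⬝ᵥ (Qnc n a b *ᵥ x) +
          ![-x 1, x 0] ⬝ᵥ (Qnc n a b *ᵥ ![-x 1, x 0]) =
            2 * (2 * n + 1) * (x 0 ^ 2 + x 1 ^ 2) := by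
        simp only [dot_Qnc, cons_val_zero, cons_val_one]
        ring
      have hnn : 0 ≤ 2 * (2 * n + 1) * (x 0 ^ 2 + x 1 ^ 2) := by positivity
      have hk' := (sq_nonneg _).trans hk
      by_contra! hneg
      nlinarith
end
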